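/- Let p ≥ 2 be an integer and let ω_1, …, ω_p be positive integers with s = ω_1 + ⋯ + ω_p ≤ N. The number of functions f ∈ F_N whose global orbit pattern is [ω_1, …, ω_p] equals (N−1)! · N^{N−s} / ((N−s)! · Π_{k=2}^{p} (ω_k + ω_{k+1} + ⋯ + ω_p)). -/

import Mathlib

/-!
The functions `f` are counted by exploring them one value at a time.  Start at the least unvisited
point `x` and follow `x, f x, f (f x), …` until a visited point is reached.  If that point was
visited in an earlier walk, no new component is found; if it lies on the current walk, a new
component is found, its least element is `x` (all smaller points lie in components already
discovered), and the length of its cycle is the length of the loop just closed.  Then restart at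
the least point not visited so far.  So the pattern is produced in order, entry by entry.

Hence the number of completions of a partially explored `f` depends only on the number `v` of
visited points, the length `l` of the current walk and the part `L = [w, …]` of the pattern that
is still to be produced.  With `M = N - v`, `s = L.sum` and `tailProd L` the product of the sums of
all nonempty suffixes of `L`, the number `D` of completions between two walks and the number `C`
of completions during a walk satisfy

* `D * tailProd L * N ^ (s + 1) = M.descFactorial s * (s + v) * N ^ M`,
* `C * tailProd L * N ^ s = M.descFactorial s * (v - l) * N ^ M
    + s * M.descFactorial (s - min l w) * N ^ (M + min l w)`

(for `L = []` the second summand is absent).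

Both are proved together by induction on `M` (`counts`), distinguishing the value taken at the end
of the current walk.  The theorem is the formula for `D` with nothing visited (`v = 0`).
-/

open scoped Classical

/-- Two points are in the same component of `X_N` under `f`:
`x ~ y` iff some forward iterate of `x` equals some forward iterate of `y`. -/
def sameComp {N : ℕ} (f : Fin N → Fin N) (x y : Fin N) : Prop :=
  ∃ k l : ℕ, f^[k] x = f^[l] y

/-- The order `ω(x, f)` of a point `x`: the length of the periodic cycle contained in
the component of `x`, i.e. the least `p > 0` such that the orbit of `x` is eventually
`p`-periodic. -/
noncomputable def gopOrd {N : ℕ} (f : Fin N → Fin N) (x : Fin N) : ℕ :=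
  sInf {p : ℕ | 0 < p ∧ ∃ K : ℕ, f^[K + p] x = f^[K] x}

/-- The global orbit pattern of `f`: the list of orders of the least elements of the
components of `X_N` under `f`, listed in increasing order of those least elements. -/
noncomputable def gop {N : ℕ} (f : Fin N → Fin N) : List ℕ :=
  ((Finset.univ.filter (fun x : Fin N => ∀ y : Fin N, sameComp f x y → x ≤ y)).sort (· ≤ ·)).map
    (gopOrd f)

section

variable {N : ℕ}

/-! ### The pattern relative to a set of visited points -/

lemma sameComp_refl (f : Fin N → Fin N) (x : Fin N) : sameComp f x x := ⟨0, 0, rfl⟩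

lemma sameComp_symm {f : Fin N → Fin N} {x y : Fin N} (h : sameComp f x y) : sameComp f y x := by
  obtain ⟨k, l, h⟩ := h
  exact ⟨l, k, h.symm⟩

lemma sameComp_trans {f : Fin N → Fin N} {x y z : Fin N} (h : sameComp f x y)
    (h' : sameComp f y z) : sameComp f x z := by
  obtain ⟨k, l, h⟩ := h
  obtain ⟨m, n, h'⟩ := h'
  refine ⟨m + k, l + n, ?_⟩
  rw [Function.iterate_add_apply, h, ← Function.iterate_add_apply, add_comm m l,
    Function.iterate_add_apply, h', ← Function.iterate_add_apply]

/-- The least elements of those components of `f` that do not meet `A`. -/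
noncomputable def relMins (f : Fin N → Fin N) (A : Finset (Fin N)) : Finset (Fin N) :=
  Finset.univ.filter
    (fun x => (∀ y : Fin N, sameComp f x y → x ≤ y) ∧ ∀ a ∈ A, ¬ sameComp f x a)

/-- The part of the global orbit pattern of `f` contributed by the components not meeting `A`. -/
noncomputable def relGop (f : Fin N → Fin N) (A : Finset (Fin N)) : List ℕ :=
  ((relMins f A).sort (· ≤ ·)).map (gopOrd f)

lemma relGop_empty (f : Fin N → Fin N) : relGop f ∅ = gop f := by
  simp [relGop, relMins, gop]

lemma relGop_univ (f : Fin N → Fin N) : relGop f Finset.univ = [] := by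
  have : relMins f Finset.univ = ∅ := by
    ext x
    simp only [relMins, Finset.mem_filter, Finset.mem_univ, true_and, true_implies,
      Finset.notMem_empty, iff_false]
    exact fun h => h.2 x (sameComp_refl f x)
  simp [relGop, this]

lemma iterate_mem {f : Fin N → Fin N} {A : Finset (Fin N)} (hA : ∀ a ∈ A, f a ∈ A) {a : Fin N}
    (ha : a ∈ A) (k : ℕ) : f^[k] a ∈ A := by
  induction k with
  | zero => exact ha
  | succ k ih => rw [Function.iterate_succ_apply']; exact hA _ ih

lemma walk_iterate {f : Fin N → Fin N} {a : ℕ → Fin N} {l : ℕ}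
    (hw : ∀ i, i + 1 < l → f (a i) = a (i + 1)) {i : ℕ} (hi : i < l) : f^[i] (a 0) = a i := by
  induction i with
  | zero => rfl
  | succ i ih => rw [Function.iterate_succ_apply', ih (by omega), hw i hi]

/-- A walk that runs into the visited set finds no new component. -/
lemma relGop_old {f : Fin N → Fin N} {A : Finset (Fin N)} {a : ℕ → Fin N} {l : ℕ} (hl : 0 < l)
    (hw : ∀ i, i + 1 < l → f (a i) = a (i + 1)) (hc : f (a (l - 1)) ∈ A) :
    relGop f A = relGop f (A ∪ (Finset.range l).image a) := by
  have key : relMins f A = relMins f (A ∪ (Finset.range l).image a) := by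
    ext z
    simp only [relMins, Finset.mem_filter, Finset.mem_univ, true_and, Finset.mem_union,
      Finset.mem_image, Finset.mem_range]
    refine and_congr_right fun _ => ⟨fun h b hb => ?_, fun h b hb => h b (Or.inl hb)⟩
    rcases hb with hb | ⟨i, hi, rfl⟩
    · exact h b hb
    · intro hz
      refine h _ hc (sameComp_trans hz ?_)
      refine sameComp_trans (y := a 0) ⟨0, i, (walk_iterate hw hi).symm⟩ ⟨l, 0, ?_⟩
      obtain ⟨m, rfl⟩ : ∃ m, l = m + 1 := ⟨l - 1, by omega⟩
      rw [Function.iterate_succ_apply', walk_iterate hw (by omega)]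
      rfl
  rw [relGop, relGop, key]

lemma gopOrd_loop {f : Fin N → Fin N} {a : ℕ → Fin N} {l i : ℕ} (hi : i < l)
    (hw : ∀ i, i + 1 < l → f (a i) = a (i + 1)) (hinj : ∀ i < l, ∀ j < l, a i = a j → i = j)
    (hc : f (a (l - 1)) = a i) : gopOrd f (a 0) = l - i := by
  have hl : f^[l] (a 0) = a i := by
    obtain ⟨m, rfl⟩ : ∃ m, l = m + 1 := ⟨l - 1, by omega⟩
    rw [Function.iterate_succ_apply', walk_iterate hw (by omega)]
    exact hc
  have hper : f^[l - i] (a i) = a i := by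
    conv_lhs => rw [← walk_iterate hw hi]
    rw [← Function.iterate_add_apply, show l - i + i = l by omega, hl]
  have hmul : ∀ K : ℕ, f^[(l - i) * K] (a i) = a i := by
    intro K
    rw [Function.iterate_mul]
    exact Function.iterate_fixed hper K
  apply le_antisymm
  · refine Nat.sInf_le ⟨by omega, i, ?_⟩
    rw [show i + (l - i) = l by omega, hl, walk_iterate hw hi]
  · refine le_csInf ⟨l - i, by omega, i, ?_⟩ ?_
    · rw [show i + (l - i) = l by omega, hl, walk_iterate hw hi]
    rintro p ⟨hp, K, hK⟩
    by_contra hlt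
    push Not at hlt
    have hKle : K ≤ (l - i) * K := Nat.le_mul_of_pos_left _ (by omega)
    -- Going `K` times around the loop reaches `a i` after at least `K` steps, so `p` is a period
    -- of `a i`.
    have h1 : f^[p] (a i) = a i := by
      have h2 : f^[(l - i) * K + i] (a 0) = a i := by
        rw [Function.iterate_add_apply, walk_iterate hw hi, hmul]
      have h3 : f^[p] (f^[(l - i) * K + i] (a 0)) = f^[(l - i) * K + i] (a 0) := by
        rw [← Function.iterate_add_apply,
          show p + ((l - i) * K + i) = ((l - i) * K + i - K) + (K + p) by omega,
          Function.iterate_add_apply, hK, ← Function.iterate_add_apply,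
          show (l - i) * K + i - K + K = (l - i) * K + i by omega]
      rwa [h2] at h3
    have h4 : a (p + i) = a i := by
      rw [← walk_iterate hw (show p + i < l by omega), Function.iterate_add_apply,
        walk_iterate hw hi, h1]
    have := hinj _ (by omega) _ hi h4
    omega

/-- A walk that closes a loop of length `l - i` produces the next entry of the pattern, provided it
started at the least point outside the visited set. -/
lemma relGop_new {f : Fin N → Fin N} {A : Finset (Fin N)} {a : ℕ → Fin N} {l i : ℕ} (hi : i < l)
    (hA : ∀ b ∈ A, f b ∈ A) (hmin : ∀ y, y ∉ A → a 0 ≤ y)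
    (hw : ∀ i, i + 1 < l → f (a i) = a (i + 1)) (hinj : ∀ i < l, ∀ j < l, a i = a j → i = j)
    (hdis : ∀ i < l, a i ∉ A) (hc : f (a (l - 1)) = a i) :
    relGop f A = (l - i) :: relGop f (A ∪ (Finset.range l).image a) := by
  set P := (Finset.range l).image a with hP
  have hPinv : ∀ b ∈ P, f b ∈ P := by
    intro b hb
    obtain ⟨j, hj, rfl⟩ := Finset.mem_image.1 hb
    rw [Finset.mem_range] at hj
    by_cases hjl : j + 1 < l
    · rw [hw j hjl]; exact Finset.mem_image_of_mem _ (Finset.mem_range.2 hjl)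
    · rw [show j = l - 1 by omega, hc]; exact Finset.mem_image_of_mem _ (Finset.mem_range.2 hi)
  have h0P : a 0 ∈ P := Finset.mem_image_of_mem _ (Finset.mem_range.2 (by omega))
  have hx : ∀ b ∈ A, ¬ sameComp f (a 0) b := by
    rintro b hb ⟨k, m, h⟩
    have h1 := iterate_mem hPinv h0P k
    have h2 := iterate_mem hA hb m
    rw [← h] at h2
    obtain ⟨j, hj, hj'⟩ := Finset.mem_image.1 h1
    rw [← hj'] at h2
    exact hdis j (Finset.mem_range.1 hj) h2
  have hxmin : ∀ y, sameComp f (a 0) y → a 0 ≤ y :=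
    fun y hy => hmin y fun hyA => hx y hyA hy
  have hPx : ∀ b ∈ P, sameComp f (a 0) b := by
    intro b hb
    obtain ⟨j, hj, rfl⟩ := Finset.mem_image.1 hb
    exact ⟨j, 0, walk_iterate hw (Finset.mem_range.1 hj)⟩
  have hnot : a 0 ∉ relMins f (A ∪ P) := by
    intro h
    exact (Finset.mem_filter.1 h).2.2 (a 0) (Finset.mem_union_right _ h0P) (sameComp_refl _ _)
  have key : relMins f A = insert (a 0) (relMins f (A ∪ P)) := by
    ext z
    simp only [relMins, Finset.mem_filter, Finset.mem_univ, true_and, Finset.mem_insert]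
    constructor
    · rintro ⟨h1, h2⟩
      by_cases hz : sameComp f z (a 0)
      · exact Or.inl (le_antisymm (h1 _ hz) (hxmin _ (sameComp_symm hz)))
      · refine Or.inr ⟨h1, fun b hb => ?_⟩
        rcases Finset.mem_union.1 hb with hb | hb
        · exact h2 b hb
        · exact fun h => hz (sameComp_trans h (sameComp_symm (hPx b hb)))
    · rintro (rfl | ⟨h1, h2⟩)
      · exact ⟨hxmin, hx⟩
      · exact ⟨h1, fun b hb => h2 b (Finset.mem_union_left _ hb)⟩
  rw [relGop, relGop, key, Finset.sort_insert _ ?_ hnot, List.map_cons,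
    gopOrd_loop hi hw hinj hc]
  intro b hb
  exact hmin b fun hbA =>
    (Finset.mem_filter.1 hb).2.2 b (Finset.mem_union_left _ hbA) (sameComp_refl _ _)

/-! ### Counting completions -/

/-- The number of `f` that agree with `g` on `W` and whose components not meeting `A` have
pattern `L`. -/
noncomputable def cnt (W A : Finset (Fin N)) (g : Fin N → Fin N) (L : List ℕ) : ℕ :=
  (Finset.univ.filter (fun f : Fin N → Fin N => (∀ w ∈ W, f w = g w) ∧ relGop f A = L)).card

lemma cnt_split {W A : Finset (Fin N)} {g : Fin N → Fin N} {L : List ℕ} {c : Fin N} (hc : c ∉ W) :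
    cnt W A g L = ∑ y, cnt (insert c W) A (Function.update g c y) L := by
  unfold cnt
  rw [Finset.card_eq_sum_card_fiberwise (f := fun f => f c) (t := Finset.univ) (by simp)]
  refine Finset.sum_congr rfl fun y _ => ?_
  congr 1
  ext f
  simp only [Finset.mem_filter, Finset.mem_univ, true_and, Finset.mem_insert, forall_eq_or_imp,
    Function.update_self]
  have : (∀ w ∈ W, f w = Function.update g c y w) ↔ ∀ w ∈ W, f w = g w := by
    refine forall₂_congr fun w hw => ?_
    rw [Function.update_of_ne (by rintro rfl; exact hc hw)]
  rw [this]
  tauto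

lemma cnt_congr {W A B : Finset (Fin N)} {g : Fin N → Fin N} {L L' : List ℕ}
    (h : ∀ f : Fin N → Fin N, (∀ w ∈ W, f w = g w) → (relGop f A = L ↔ relGop f B = L')) :
    cnt W A g L = cnt W B g L' := by
  unfold cnt
  congr 1
  ext f
  simp only [Finset.mem_filter, Finset.mem_univ, true_and]
  exact and_congr_right (h f)

lemma cnt_eq_zero {W A : Finset (Fin N)} {g : Fin N → Fin N} {L : List ℕ}
    (h : ∀ f : Fin N → Fin N, (∀ w ∈ W, f w = g w) → relGop f A ≠ L) :
    cnt W A g L = 0 := by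
  unfold cnt
  rw [Finset.card_eq_zero, Finset.filter_eq_empty_iff]
  exact fun f _ hf => h f hf.1 hf.2

/-- The product of the sums of all nonempty suffixes of a list. -/
def tailProd : List ℕ → ℕ
  | [] => 1
  | w :: L => (w + L.sum) * tailProd L

/-- The number of completions during a walk, multiplied by `tailProd L * N ^ L.sum`, where `α`
points were visited before the walk, the walk has `l` points, and `M` points are unvisited. -/
def walkForm (N α l M : ℕ) : List ℕ → ℕ
  | [] => α * N ^ M
  | w :: L => M.descFactorial (w + L.sum) * α * N ^ M +
      (w + L.sum) * M.descFactorial (w + L.sum - min l w) * N ^ (M + min l w)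

/-- An unfinished walk: the set `A` is closed under `g`, and `a 0, …, a (l - 1)` are distinct
points outside `A`, beginning at the least point outside `A` and each mapped by `g` to the next. -/
structure IsWalk (g : Fin N → Fin N) (A : Finset (Fin N)) (a : ℕ → Fin N) (l : ℕ) : Prop where
  pos : 0 < l
  closed : ∀ b ∈ A, g b ∈ A
  min : ∀ y, y ∉ A → a 0 ≤ y
  step : ∀ i, i + 1 < l → g (a i) = a (i + 1)
  inj : ∀ i < l, ∀ j < l, a i = a j → i = j
  disj : ∀ i < l, a i ∉ A

/-- The formula for the number of completions between two walks, with `M` unvisited points. -/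
def RestFormula (N M : ℕ) : Prop :=
  ∀ (A : Finset (Fin N)) (g : Fin N → Fin N) (L : List ℕ), A.card + M = N → (∀ b ∈ A, g b ∈ A) →
    (∀ w ∈ L, 0 < w) →
    cnt A A g L * tailProd L * N ^ (L.sum + 1) = M.descFactorial L.sum * (L.sum + A.card) * N ^ M

/-- The formula for the number of completions during a walk, with `M` unvisited points. The value
at the end `a (l - 1)` of the walk is the next one to be chosen. -/
def WalkFormula (N M : ℕ) : Prop :=
  ∀ (A : Finset (Fin N)) (g : Fin N → Fin N) (a : ℕ → Fin N) (l : ℕ) (L : List ℕ),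
    A.card + l + M = N → IsWalk g A a l → (∀ w ∈ L, 0 < w) →
    cnt (A ∪ (Finset.range (l - 1)).image a) A g L * tailProd L * N ^ L.sum
      = walkForm N A.card l M L

lemma rest_zero : RestFormula N 0 := by
  intro A g L hcard _ hL
  obtain rfl : A = Finset.univ := by
    rw [← Finset.card_eq_iff_eq_univ, Fintype.card_fin]; omega
  cases L with
  | nil =>
    have : cnt Finset.univ Finset.univ g [] = 1 := by
      unfold cnt
      rw [Finset.card_eq_one]
      refine ⟨g, ?_⟩
      ext f
      simp [relGop_univ, funext_iff]
    simp [this, tailProd]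
  | cons w L =>
    have hw : 0 < w := hL w (by simp)
    rw [cnt_eq_zero fun f _ => by simp [relGop_univ]]
    obtain ⟨w, rfl⟩ : ∃ v, w = v + 1 := ⟨w - 1, by omega⟩
    simp [show w + 1 + L.sum = (w + L.sum) + 1 by omega]

/-- A new walk, consisting of a single point so far, starts at the least unvisited point. -/
lemma rest_succ {M : ℕ} (h : WalkFormula N M) : RestFormula N (M + 1) := by
  intro A g L hcard hA hL
  obtain ⟨x, hx, hmin⟩ : ∃ x, x ∉ A ∧ ∀ y, y ∉ A → x ≤ y := by
    have hne : Aᶜ.Nonempty := by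
      rw [← Finset.card_pos, Finset.card_compl, Fintype.card_fin]; omega
    exact ⟨Aᶜ.min' hne, Finset.mem_compl.1 (Finset.min'_mem _ _),
      fun y hy => Finset.min'_le _ _ (Finset.mem_compl.2 hy)⟩
  have := h A g (fun _ => x) 1 L (by omega)
    ⟨one_pos, hA, hmin, fun i hi => by omega, fun i hi j hj _ => by omega, fun _ _ => hx⟩ hL
  simp only [Nat.sub_self, Finset.range_zero, Finset.image_empty, Finset.union_empty] at this
  rw [pow_succ, ← mul_assoc, this]
  cases L with
  | nil =>
    simp only [walkForm, List.sum_nil, Nat.descFactorial_zero]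
    ring
  | cons w L =>
    have hw : 0 < w := hL w (by simp)
    simp only [walkForm, List.sum_cons]
    rw [min_eq_left hw]
    obtain ⟨s, hs⟩ : ∃ s, w + L.sum = s + 1 := ⟨w + L.sum - 1, by omega⟩
    rw [hs, Nat.succ_descFactorial_succ, Nat.descFactorial_succ, Nat.add_sub_cancel]
    by_cases hsM : s ≤ M
    · obtain ⟨t, rfl⟩ := Nat.exists_eq_add_of_le hsM
      rw [Nat.add_sub_cancel_left]
      conv_lhs => rw [pow_succ]
      conv_rhs => rw [pow_succ]
      generalize N ^ (s + t) = X
      generalize A.card = α at *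
      rw [← hcard]
      ring
    · rw [Nat.descFactorial_of_lt (by omega)]
      ring

/-- The value `y` at the end of the walk is one of the `A.card` points visited before (the walk ends
and the pattern still to come is `L`), one of the `l` points of the walk (a loop is closed, whose
length has to be the head of `L`), or one of the `M` unvisited points (the walk goes on). -/
lemma walk_step {M : ℕ} (hD : RestFormula N M) (hC : ∀ m, M = m + 1 → WalkFormula N m) :
    WalkFormula N M := by
  intro A g a l L hcard hwalk hL
  obtain ⟨hl, hA, hmin, hstep, hinj, hdis⟩ := hwalk
  set P := (Finset.range l).image a with hP
  set W := A ∪ (Finset.range (l - 1)).image a with hW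
  set c := a (l - 1) with hc
  have hNpos : 0 < N := by omega
  have hcA : c ∉ A := hdis _ (by omega)
  have hcW : c ∉ W := by
    rw [hW, Finset.mem_union, not_or]
    refine ⟨hcA, fun h => ?_⟩
    obtain ⟨j, hj, h⟩ := Finset.mem_image.1 h
    rw [Finset.mem_range] at hj
    have := hinj _ (by omega) _ (by omega) h
    omega
  have hins : insert c W = A ∪ P := by
    rw [hW, hP, ← Finset.union_insert, hc, ← Finset.image_insert, ← Finset.range_add_one,
      Nat.sub_add_cancel hl]
  have hdAP : Disjoint A P := by
    rw [Finset.disjoint_right]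
    intro b hb
    obtain ⟨j, hj, rfl⟩ := Finset.mem_image.1 hb
    exact hdis j (Finset.mem_range.1 hj)
  have hinjOn : Set.InjOn a (Finset.range l : Set ℕ) := fun i hi j hj h =>
    hinj i (by simpa using hi) j (by simpa using hj) h
  have hPcard : P.card = l := by
    rw [hP, Finset.card_image_of_injOn hinjOn, Finset.card_range]
  have hBcard : (A ∪ P).card = A.card + l := by
    rw [Finset.card_union_of_disjoint hdAP, hPcard]
  have hgA : ∀ y, ∀ b ∈ A, Function.update g c y b = g b := fun y b hb =>
    Function.update_of_ne (by rintro rfl; exact hcA hb) _ _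
  have hgstep : ∀ y, ∀ i, i + 1 < l → Function.update g c y (a i) = a (i + 1) := by
    intro y i hi
    rw [Function.update_of_ne, hstep i hi]
    intro h
    have := hinj _ (by omega) _ (by omega) h
    omega
  -- What is known about every completion once the end of the walk is sent to `y`.
  have hf : ∀ y, ∀ f : Fin N → Fin N, (∀ w ∈ A ∪ P, f w = Function.update g c y w) →
      (∀ b ∈ A, f b ∈ A) ∧ (∀ i, i + 1 < l → f (a i) = a (i + 1)) ∧ f (a (l - 1)) = y := by
    intro y f h
    have hPm : ∀ i < l, a i ∈ A ∪ P := fun i hi =>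
      Finset.mem_union_right _ (Finset.mem_image_of_mem _ (Finset.mem_range.2 hi))
    refine ⟨fun b hb => ?_, fun i hi => ?_, ?_⟩
    · rw [h b (Finset.mem_union_left _ hb), hgA y b hb]; exact hA b hb
    · rw [h _ (hPm i (by omega)), hgstep y i hi]
    · rw [h _ (hPm _ (by omega)), ← hc, Function.update_self]
  have hgB : ∀ y ∈ A ∪ P, ∀ b ∈ A ∪ P, Function.update g c y b ∈ A ∪ P := by
    intro y hy b hb
    rcases Finset.mem_union.1 hb with hb | hb
    · rw [hgA y b hb]; exact Finset.mem_union_left _ (hA b hb)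
    · obtain ⟨j, hj, rfl⟩ := Finset.mem_image.1 hb
      rw [Finset.mem_range] at hj
      by_cases hjl : j + 1 < l
      · rw [hgstep y j hjl]
        exact Finset.mem_union_right _ (Finset.mem_image_of_mem _ (Finset.mem_range.2 hjl))
      · rw [show j = l - 1 by omega, ← hc, Function.update_self]; exact hy
  set T := fun y => cnt (A ∪ P) A (Function.update g c y) L with hT
  have hsplit : cnt W A g L = ∑ y ∈ A, T y + ∑ y ∈ P, T y + ∑ y ∈ (A ∪ P)ᶜ, T y := by
    rw [cnt_split hcW, hins, ← Finset.sum_union hdAP, Finset.sum_add_sum_compl]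
  have hold : ∀ y ∈ A, T y * tailProd L * N ^ (L.sum + 1)
      = M.descFactorial L.sum * (L.sum + (A.card + l)) * N ^ M := by
    intro y hy
    rw [← hBcard, ← hD (A ∪ P) (Function.update g c y) L (by omega)
      (hgB y (Finset.mem_union_left _ hy)) hL]
    congr 2
    refine cnt_congr fun f h => ?_
    obtain ⟨h1, h2, h3⟩ := hf y f h
    rw [relGop_old hl h2 (h3 ▸ hy)]
  have hnew : ∀ y ∈ (A ∪ P)ᶜ, ∃ m, M = m + 1 ∧
      T y * tailProd L * N ^ L.sum = walkForm N A.card (l + 1) m L := by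
    intro y hy
    rw [Finset.mem_compl] at hy
    have hlt : (A ∪ P).card < N := by
      have := Finset.card_lt_univ_of_notMem hy
      rwa [Fintype.card_fin] at this
    obtain ⟨m, hm⟩ : ∃ m, M = m + 1 := ⟨M - 1, by omega⟩
    refine ⟨m, hm, ?_⟩
    have ha : ∀ i < l, Function.update a l y i = a i := fun i hi =>
      Function.update_of_ne (by omega) _ _
    have hyP : ∀ i < l, a i ≠ y := fun i hi h => hy (Finset.mem_union_right _
      (h ▸ Finset.mem_image_of_mem _ (Finset.mem_range.2 hi)))
    have := hC m hm A (Function.update g c y) (Function.update a l y) (l + 1) L (by omega)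
      ⟨by omega, fun b hb => by rw [hgA y b hb]; exact hA b hb,
        fun z hz => by rw [ha 0 hl]; exact hmin z hz, ?_, ?_, ?_⟩ hL
    · rw [← this, Nat.add_sub_cancel]
      have himg : (Finset.range l).image (Function.update a l y) = P :=
        Finset.image_congr fun i hi => ha i (by simpa using hi)
      rw [himg]
    · intro i hi
      rw [ha i (by omega)]
      by_cases hil : i + 1 < l
      · rw [ha _ hil, hgstep y i hil]
      · obtain rfl : i = l - 1 := by omega
        rw [Nat.sub_add_cancel hl, Function.update_self, Function.update_self]
    · intro i hi j hj h
      rcases Nat.lt_succ_iff_lt_or_eq.1 hi with hi | rfl <;>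
        rcases Nat.lt_succ_iff_lt_or_eq.1 hj with hj | rfl
      · rw [ha i hi, ha j hj] at h
        exact hinj i hi j hj h
      · rw [ha i hi, Function.update_self] at h
        exact absurd h (hyP i hi)
      · rw [ha j hj, Function.update_self] at h
        exact absurd h.symm (hyP j hj)
      · rfl
    · intro i hi
      rcases Nat.lt_succ_iff_lt_or_eq.1 hi with hi | rfl
      · rw [ha i hi]; exact hdis i hi
      · rw [Function.update_self]
        exact fun h => hy (Finset.mem_union_left _ h)
  have hccard : ((A ∪ P)ᶜ).card = M := by
    rw [Finset.card_compl, Fintype.card_fin, hBcard]; omega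
  have hrel : ∀ i < l, ∀ f : Fin N → Fin N,
      (∀ w ∈ A ∪ P, f w = Function.update g c (a i) w) →
      relGop f A = (l - i) :: relGop f (A ∪ P) := by
    intro i hi f h
    obtain ⟨h1, h2, h3⟩ := hf (a i) f h
    exact relGop_new hi h1 hmin h2 hinj hdis h3
  have hsumA : (∑ y ∈ A, T y) * (tailProd L * N ^ (L.sum + 1))
      = A.card * (M.descFactorial L.sum * (L.sum + (A.card + l)) * N ^ M) := by
    rw [Finset.sum_mul, Finset.sum_congr rfl (fun y hy => by rw [← mul_assoc, hold y hy]),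
      Finset.sum_const, smul_eq_mul]
  have hsumP : ∑ y ∈ P, T y = ∑ i ∈ Finset.range l, T (a i) := Finset.sum_image hinjOn
  refine Nat.eq_of_mul_eq_mul_right hNpos ?_
  cases L with
  | nil =>
    have hP0 : ∑ y ∈ P, T y = 0 := by
      rw [hsumP]
      refine Finset.sum_eq_zero fun i hi => cnt_eq_zero fun f h => ?_
      rw [hrel i (Finset.mem_range.1 hi) f h]
      simp
    have hC0 : (∑ y ∈ (A ∪ P)ᶜ, T y) * N = M * (A.card * N ^ M) := by
      rw [Finset.sum_mul, ← hccard, ← smul_eq_mul (Finset.card _), ← Finset.sum_const, hccard]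
      refine Finset.sum_congr rfl fun y hy => ?_
      obtain ⟨m, hm, h⟩ := hnew y hy
      simp only [tailProd, List.sum_nil, pow_zero, mul_one, walkForm] at h
      rw [h, hm, pow_succ]; ring
    simp only [tailProd, List.sum_nil, pow_zero, mul_one, one_mul, zero_add, pow_one,
      Nat.descFactorial_zero] at hsumA ⊢
    rw [hsplit, hP0, add_zero, add_mul, hsumA, hC0, walkForm]
    generalize N ^ M = X
    generalize A.card = α at *
    rw [← hcard]
    ring
  | cons w L =>
    have hw : 0 < w := hL w (by simp)
    have hL' : ∀ w ∈ L, 0 < w := fun v hv => hL v (by simp [hv])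
    -- Only the closing point at distance `w` from the end of the walk gives a loop of length `w`.
    have hP0 : (∑ y ∈ P, T y) * (tailProd (w :: L) * N ^ ((w :: L).sum + 1)) =
        if w ≤ l then (w + L.sum) * (M.descFactorial L.sum * (L.sum + (A.card + l)) * N ^ M)
          * N ^ w else 0 := by
      have hTi : ∀ i < l, T (a i) * (tailProd (w :: L) * N ^ ((w :: L).sum + 1)) =
          if l - i = w then (w + L.sum) * (M.descFactorial L.sum * (L.sum + (A.card + l)) * N ^ M)
          * N ^ w else 0 := by
        intro i hi
        split_ifs with h
        · have hTD : T (a i) = cnt (A ∪ P) (A ∪ P) (Function.update g c (a i)) L := by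
            refine cnt_congr fun f hf => ?_
            rw [hrel i hi f hf, h]
            simp
          have haP : a i ∈ P := Finset.mem_image_of_mem _ (Finset.mem_range.2 hi)
          rw [← hBcard, ← hD (A ∪ P) (Function.update g c (a i)) L (by omega)
            (hgB _ (Finset.mem_union_right _ haP)) hL', ← hTD, tailProd, List.sum_cons]
          ring
        · have : T (a i) = 0 := by
            refine cnt_eq_zero fun f hf => ?_
            rw [hrel i hi f hf]
            intro h'
            exact h (List.cons.inj h').1
          rw [this, zero_mul]
      rw [hsumP, Finset.sum_mul, Finset.sum_congr rfl fun i hi => hTi i (Finset.mem_range.1 hi)]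
      split_ifs with h
      · rw [Finset.sum_eq_single (l - w), if_pos (by omega)]
        · intro i hi hne
          rw [Finset.mem_range] at hi
          exact if_neg (by omega)
        · intro h'
          rw [Finset.mem_range] at h'
          omega
      · refine Finset.sum_eq_zero fun i hi => if_neg ?_
        omega
    have hC0 : (∑ y ∈ (A ∪ P)ᶜ, T y) * (tailProd (w :: L) * N ^ ((w :: L).sum + 1)) =
        M * ((M - 1).descFactorial (w + L.sum) * A.card * N ^ M +
          (w + L.sum) * (M - 1).descFactorial (w + L.sum - min (l + 1) w)
            * N ^ (M + min (l + 1) w)) := by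
      rw [Finset.sum_mul, ← hccard, ← smul_eq_mul (Finset.card _), ← Finset.sum_const, hccard]
      refine Finset.sum_congr rfl fun y hy => ?_
      obtain ⟨m, hm, h⟩ := hnew y hy
      rw [pow_succ, ← mul_assoc, ← mul_assoc, h, hm, walkForm, Nat.add_sub_cancel]
      ring
    rw [hsplit, mul_assoc, mul_assoc, ← mul_assoc (tailProd _), mul_assoc (tailProd _), ← pow_succ,
      add_mul, add_mul, hsumA, hP0, hC0, walkForm, List.sum_cons]
    have hdesc : ∀ t, M * (M - 1).descFactorial t = M.descFactorial t * (M - t) := by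
      intro t
      rw [mul_comm (M.descFactorial t), ← Nat.descFactorial_succ]
      cases M with
      | zero => simp
      | succ m => rw [Nat.succ_descFactorial_succ, Nat.add_sub_cancel]
    have hdesc' : ∀ t, M.descFactorial t * (M - t + t) = M.descFactorial t * M := by
      intro t
      by_cases h : t ≤ M
      · rw [Nat.sub_add_cancel h]
      · rw [Nat.descFactorial_of_lt (by omega)]; simp
    set s := w + L.sum with hs
    have e1 : A.card * (M.descFactorial s * (s + (A.card + l)) * N ^ M)
        + M * ((M - 1).descFactorial s * A.card * N ^ M)
        = M.descFactorial s * A.card * N ^ M * N := by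
      have h1 := hdesc s
      have h2 := hdesc' s
      generalize N ^ M = X
      generalize A.card = α at *
      rw [← hcard]
      linear_combination (α * X) * h1 + (α * X) * h2
    split_ifs with hwl
    · rw [min_eq_right hwl, min_eq_right (by omega), show s - w = L.sum by omega]
      have e2 : s * (M.descFactorial L.sum * (L.sum + (A.card + l)) * N ^ M) * N ^ w
          + M * (s * (M - 1).descFactorial L.sum * N ^ (M + w))
          = s * M.descFactorial L.sum * N ^ (M + w) * N := by
        have h1 := hdesc L.sum
        have h2 := hdesc' L.sum
        rw [pow_add]
        generalize N ^ M = X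
        generalize N ^ w = Y
        generalize A.card = α at *
        rw [← hcard]
        linear_combination (s * X * Y) * h1 + (s * X * Y) * h2
      linear_combination e1 + e2
    · rw [min_eq_left (by omega), min_eq_left (by omega)]
      have e2 : M * (s * (M - 1).descFactorial (s - (l + 1)) * N ^ (M + (l + 1)))
          = s * M.descFactorial (s - l) * N ^ (M + l) * N := by
        obtain ⟨t, ht⟩ : ∃ t, s - l = t + 1 := ⟨s - l - 1, by omega⟩
        have h1 := hdesc t
        rw [ht, show s - (l + 1) = t by omega, Nat.descFactorial_succ]
        rw [← add_assoc, pow_succ]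
        linear_combination (s * N ^ (M + l) * N) * h1
      linear_combination e1 + e2

lemma counts (N M : ℕ) : RestFormula N M ∧ WalkFormula N M := by
  induction M with
  | zero => exact ⟨rest_zero, walk_step rest_zero fun m hm => by omega⟩
  | succ M ih =>
    have hD := rest_succ ih.2
    refine ⟨hD, walk_step hD fun m hm => ?_⟩
    obtain rfl : M = m := by omega
    exact ih.2

end

/-! ### The closed formula -/

lemma sum_range'_map (ω : ℕ → ℕ) (k n : ℕ) :
    ((List.range' k n).map ω).sum = ∑ j ∈ Finset.Ico k (k + n), ω j := by
  induction n generalizing k with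
  | zero => simp
  | succ n ih =>
    rw [List.range'_succ, List.map_cons, List.sum_cons, ih,
      Finset.sum_eq_sum_Ico_succ_bot (show k < k + (n + 1) by omega),
      show k + 1 + n = k + (n + 1) by omega]

lemma tailProd_range'_map (ω : ℕ → ℕ) (k n : ℕ) :
    tailProd ((List.range' k n).map ω)
      = ∏ i ∈ Finset.Ico k (k + n), ∑ j ∈ Finset.Ico i (k + n), ω j := by
  induction n generalizing k with
  | zero => simp [tailProd]
  | succ n ih =>
    rw [List.range'_succ, List.map_cons, tailProd, ih, sum_range'_map,
      Finset.prod_eq_prod_Ico_succ_bot (show k < k + (n + 1) by omega),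
      Finset.sum_eq_sum_Ico_succ_bot (show k < k + (n + 1) by omega),
      show k + 1 + n = k + (n + 1) by omega]

/-- for `p ≥ 2` and positive integers `ω_1, …, ω_p` (here `ω 0, …, ω (p-1)`)
with `s = ω_1 + ⋯ + ω_p ≤ N`, the number of `f ∈ F_N` whose global orbit pattern is
`[ω_1, …, ω_p]` equals
`(N−1)! · N^{N−s} / ((N−s)! · Π_{k=2}^{p} (ω_k + ⋯ + ω_p))`
(stated here in multiplied-out form, the division being exact). -/
theorem card_gop_general (N p : ℕ) (hp : 2 ≤ p) (ω : ℕ → ℕ)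
    (hpos : ∀ i < p, 0 < ω i) (hs : ∑ i ∈ Finset.range p, ω i ≤ N) :
    Nat.card {f : Fin N → Fin N // gop f = (List.range p).map ω} *
        ((N - ∑ i ∈ Finset.range p, ω i).factorial *
          ∏ k ∈ Finset.Ico 1 p, ∑ j ∈ Finset.Ico k p, ω j)
      = (N - 1).factorial * N ^ (N - ∑ i ∈ Finset.range p, ω i) := by
  have hcnt : Nat.card {f : Fin N → Fin N // gop f = (List.range p).map ω}
      = cnt (N := N) ∅ ∅ id ((List.range p).map ω) := by
    rw [Nat.card_eq_fintype_card, Fintype.card_subtype]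
    simp [cnt, relGop_empty]
  have hmain := (counts N N).1 ∅ id ((List.range p).map ω) (by simp) (by simp) (by
    intro w hw
    obtain ⟨i, hi, rfl⟩ := List.mem_map.1 hw
    exact hpos i (List.mem_range.1 hi))
  have hsum : ((List.range p).map ω).sum = ∑ i ∈ Finset.range p, ω i := by
    rw [List.range_eq_range', sum_range'_map, zero_add, Finset.range_eq_Ico]
  have hprod : tailProd ((List.range p).map ω) = (∑ i ∈ Finset.range p, ω i) *
      ∏ k ∈ Finset.Ico 1 p, ∑ j ∈ Finset.Ico k p, ω j := by
    rw [List.range_eq_range', tailProd_range'_map, zero_add,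
      Finset.prod_eq_prod_Ico_succ_bot (by omega), Finset.range_eq_Ico]
  rw [← hcnt, hsum, hprod, Finset.card_empty, add_zero] at hmain
  have hspos : 0 < ∑ i ∈ Finset.range p, ω i :=
    Finset.sum_pos (fun i hi => hpos i (Finset.mem_range.1 hi)) ⟨0, Finset.mem_range.2 (by omega)⟩
  generalize (∑ i ∈ Finset.range p, ω i) = s at *
  generalize (∏ k ∈ Finset.Ico 1 p, ∑ j ∈ Finset.Ico k p, ω j) = Q at *
  generalize Nat.card {f : Fin N → Fin N // gop f = (List.range p).map ω} = C at *
  have hfac := Nat.factorial_mul_descFactorial hs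
  have hNfac : N * (N - 1).factorial = N.factorial := Nat.mul_factorial_pred (by omega)
  have hpow : N ^ (N - s) * N ^ s = N ^ N := by rw [← pow_add, Nat.sub_add_cancel hs]
  have hpos' : 0 < s * N ^ (s + 1) := Nat.mul_pos hspos (pow_pos (by omega) _)
  refine Nat.eq_of_mul_eq_mul_right hpos' ?_
  calc C * ((N - s).factorial * Q) * (s * N ^ (s + 1))
      = (N - s).factorial * (C * (s * Q) * N ^ (s + 1)) := by ring
    _ = ((N - s).factorial * N.descFactorial s) * s * N ^ N := by rw [hmain]; ring
    _ = (N - 1).factorial * N ^ (N - s) * (s * N ^ (s + 1)) := by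
      rw [hfac, ← hNfac, ← hpow]; ring
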